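/- For k ≥ 2, let G be the cycle C_{2(k+2)} on 2(k+2) vertices and H be the disjoint union of two cycles C_{k+2}. In H there exists a (k+1)-tuple with pairwise distinct entries forming a path of length k that has a local 1-neighbor with pairwise distinct entries inducing a connected subgraph, while in G no (k+1)-tuple whose entries form a path of length k has such a local 1-neighbor with pairwise distinct entries inducing a connected subgraph. -/

import Mathlib

open SimpleGraph Function

/-- A `(k+1)`-tuple forms a path of length `k`: consecutive entries adjacent, all entries
distinct. -/
def FormsPath {V : Type*} (G : SimpleGraph V) {k : ℕ} (v : Fin (k + 1) → V) : Prop :=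
  Function.Injective v ∧ ∀ i : Fin k, G.Adj (v i.castSucc) (v i.succ)

/-- A tuple induces a connected subgraph. -/
def InducesConnected {V : Type*} (G : SimpleGraph V) {m : ℕ} (v : Fin m → V) : Prop :=
  (G.induce (Set.range v)).Connected

theorem SimpleGraph.exists_eq_one_or_neg_one_dvd_of_cycleGraph_adj {n : ℕ} {a b : Fin n}
    (h : (cycleGraph n).Adj a b) :
    ∃ e : ℤ, (e = 1 ∨ e = -1) ∧ (n : ℤ) ∣ (b : ℤ) - a - e := by
  have sub_val (c d : Fin n) (hcd : (c - d).val = 1) : (n : ℤ) ∣ (c : ℤ) - d - 1 := by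
    have hc := c.isLt
    have hd := d.isLt
    rw [Fin.sub_def] at hcd
    have hdiv := Nat.div_add_mod (n - d + c) n
    simp only at hcd
    refine ⟨((n - d + c) / n : ℕ) - 1, ?_⟩
    rw [hcd] at hdiv
    zify [hd.le] at hdiv
    push_cast [hd.le]
    linarith
  rw [cycleGraph_adj'] at h
  rcases h with h | h
  · refine ⟨-1, Or.inr rfl, ?_⟩
    have := Int.dvd_neg.2 (sub_val a b h)
    convert this using 1
    ring
  · exact ⟨1, Or.inl rfl, sub_val b a h⟩

theorem Fin.eq_of_natCast_dvd_intCast_sub {n : ℕ} {a b : Fin n}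
    (h : (n : ℤ) ∣ (a : ℤ) - b) : a = b := by
  have ha := a.isLt
  have hb := b.isLt
  have := Int.eq_zero_of_abs_lt_dvd h (by rw [abs_lt]; omega)
  omega

/-- A path in a cycle keeps going in the direction of its first step. -/
theorem FormsPath.exists_forall_dvd_of_cycleGraph {n k : ℕ} (hk : 1 ≤ k)
    {v : Fin (k + 1) → Fin n} (hv : FormsPath (cycleGraph n) v) :
    ∃ s : ℤ, (s = 1 ∨ s = -1) ∧
      ∀ j : Fin (k + 1), (n : ℤ) ∣ (v j : ℤ) - v 0 - (j : ℕ) * s := by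
  obtain ⟨hinj, hadj⟩ := hv
  have step (i : ℕ) (hi : i < k) : ∃ e : ℤ, (e = 1 ∨ e = -1) ∧
      (n : ℤ) ∣ (v ⟨i + 1, by omega⟩ : ℤ) - v ⟨i, by omega⟩ - e :=
    exists_eq_one_or_neg_one_dvd_of_cycleGraph_adj (hadj ⟨i, hi⟩)
  obtain ⟨s, hs, h1⟩ := step 0 hk
  refine ⟨s, hs, ?_⟩
  suffices H : ∀ i (hi : i + 1 < k + 1),
      (n : ℤ) ∣ (v ⟨i, by omega⟩ : ℤ) - v 0 - i * s ∧
      (n : ℤ) ∣ (v ⟨i + 1, hi⟩ : ℤ) - v 0 - (i + 1) * s by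
    rintro ⟨j, hj⟩
    rcases j with _ | j
    · simp
    · simpa using (H j hj).2
  intro i
  induction i with
  | zero => exact fun _ => ⟨by simp, by simpa using h1⟩
  | succ i ih =>
    intro hi
    obtain ⟨h2, h3⟩ := ih (by omega)
    obtain ⟨e, he, h4⟩ := step (i + 1) (by omega)
    refine ⟨by simpa using h3, ?_⟩
    have hes : e = s ∨ e = -s := by omega
    rcases hes with rfl | rfl
    · convert Int.dvd_add h3 h4 using 1
      push_cast
      ring
    · have h5 : v ⟨i + 1 + 1, hi⟩ = v ⟨i, by omega⟩ := by
        apply Fin.eq_of_natCast_dvd_intCast_sub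
        convert Int.dvd_sub (Int.dvd_add h3 h4) h2 using 1
        ring
      have := hinj h5
      simp [Fin.ext_iff] at this
      omega

theorem FormsPath.inducesConnected {V : Type*} {G : SimpleGraph V} {k : ℕ}
    {v : Fin (k + 1) → V} (hv : FormsPath G v) : InducesConnected G v := by
  have reach (j : Fin (k + 1)) :
      (G.induce (Set.range v)).Reachable ⟨v 0, 0, rfl⟩ ⟨v j, j, rfl⟩ := by
    induction j using Fin.induction with
    | zero => exact Reachable.refl _
    | succ i ih => exact ih.trans (Adj.reachable (hv.2 i))
  refine (connected_iff_exists_forall_reachable _).2 ⟨⟨v 0, 0, rfl⟩, ?_⟩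
  rintro ⟨_, j, rfl⟩
  exact reach j

/-- For `k ≥ 2`, let `G = C_{2(k+2)}` and `H = C_{k+2} ⊔ C_{k+2}`.
In `H` there is a `(k+1)`-tuple with pairwise distinct entries forming a path of length
`k` that has a local `1`-neighbor with pairwise distinct entries inducing a connected
subgraph, while in `G` no `(k+1)`-tuple forming a path of length `k` has such a local
`1`-neighbor. -/
theorem cycle_vs_two_cycles_local_one_neighbor (k : ℕ) (hk : 2 ≤ k) :
    (∃ v : Fin (k + 1) → (Fin (k + 2) ⊕ Fin (k + 2)),
        FormsPath (cycleGraph (k + 2) ⊕g cycleGraph (k + 2)) v ∧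
        ∃ x, (cycleGraph (k + 2) ⊕g cycleGraph (k + 2)).Adj (v 0) x ∧
          Function.Injective (Function.update v 0 x) ∧
          InducesConnected (cycleGraph (k + 2) ⊕g cycleGraph (k + 2))
            (Function.update v 0 x)) ∧
    (∀ v : Fin (k + 1) → Fin (2 * (k + 2)),
        FormsPath (cycleGraph (2 * (k + 2))) v →
        ¬ ∃ x, (cycleGraph (2 * (k + 2))).Adj (v 0) x ∧
            Function.Injective (Function.update v 0 x) ∧
            InducesConnected (cycleGraph (2 * (k + 2))) (Function.update v 0 x)) := by
  refine ⟨?_, ?_⟩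
  · have adj_succ (a b : Fin (k + 2)) (h : (b : ℕ) = a + 1) :
        (cycleGraph (k + 2) ⊕g cycleGraph (k + 2)).Adj (.inl a) (.inl b) := by
      rw [sum_adj_inl, cycleGraph_adj']
      right
      rw [Fin.sub_val_of_le (by rw [Fin.le_def]; omega)]
      omega
    let v : Fin (k + 1) → Fin (k + 2) ⊕ Fin (k + 2) := fun i => .inl i.castSucc
    let w : Fin (k + 1) → Fin (k + 2) ⊕ Fin (k + 2) := fun i => .inl i.succ
    have hw : FormsPath (cycleGraph (k + 2) ⊕g cycleGraph (k + 2)) w :=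
      ⟨Sum.inl_injective.comp (Fin.succ_injective _), fun i => adj_succ _ _ (by simp)⟩
    have hvinj : Function.Injective v :=
      Sum.inl_injective.comp (Fin.castSucc_injective _)
    have hlast (i : Fin (k + 1)) : v i ≠ .inl (Fin.last (k + 1)) := fun h =>
      (Fin.castSucc_lt_last i).ne (Sum.inl_injective h)
    have hrange : Set.range (update v 0 (.inl (Fin.last (k + 1)))) = Set.range w := by
      ext y
      constructor
      · rintro ⟨i, rfl⟩
        rcases Fin.eq_zero_or_eq_succ i with rfl | ⟨j, rfl⟩
        · exact ⟨Fin.last k, by simp [w]⟩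
        · exact ⟨j.castSucc, by simp [v, w]⟩
      · rintro ⟨i, rfl⟩
        induction i using Fin.lastCases with
        | last => exact ⟨0, by simp [w]⟩
        | cast j => exact ⟨j.succ, by simp [v, w]⟩
    refine ⟨v, ⟨hvinj, fun i => adj_succ _ _ (by simp)⟩, .inl (Fin.last (k + 1)), ?_, ?_, ?_⟩
    · rw [sum_adj_inl, cycleGraph_adj']
      left
      simp
    · intro i j hij
      by_cases hi : i = 0 <;> by_cases hj : j = 0
      · rw [hi, hj]
      · subst hi
        rw [update_self, update_of_ne hj] at hij
        exact (hlast j hij.symm).elim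
      · subst hj
        rw [update_self, update_of_ne hi] at hij
        exact (hlast i hij).elim
      · rw [update_of_ne hi, update_of_ne hj] at hij
        exact hvinj hij
    · rw [InducesConnected, hrange]
      exact hw.inducesConnected
  · rintro v hv ⟨x, hx, hinj, hconn⟩
    obtain ⟨s, hs, hvs⟩ := hv.exists_forall_dvd_of_cycleGraph (by omega)
    obtain ⟨e, he, hxe⟩ := exists_eq_one_or_neg_one_dvd_of_cycleGraph_adj hx
    let one : Fin (k + 1) := ⟨1, by omega⟩
    have hone : one ≠ 0 := by simp [one, Fin.ext_iff]
    have hxv (j : Fin (k + 1)) (hj : j ≠ 0) : x ≠ v j := by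
      intro h
      refine hj (hinj ?_)
      rw [update_self, update_of_ne hj, h]
    have hes : e = -s := by
      have : e ≠ s := by
        rintro rfl
        refine hxv one hone (Fin.eq_of_natCast_dvd_intCast_sub ?_)
        convert Int.dvd_sub hxe (hvs one) using 1
        simp [one]
      omega
    subst hes
    have : Nontrivial (Set.range (update v 0 x)) :=
      ⟨⟨x, 0, update_self ..⟩, ⟨v one, one, update_of_ne hone ..⟩,
        fun h => hxv one hone (congrArg Subtype.val h)⟩
    obtain ⟨⟨_, j, rfl⟩, hadj⟩ :=
      hconn.preconnected.exists_adj_of_nontrivial ⟨x, 0, update_self ..⟩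
    replace hadj : (cycleGraph (2 * (k + 2))).Adj x (update v 0 x j) := hadj
    have hj : j ≠ 0 := by
      rintro rfl
      rw [update_self] at hadj
      exact hadj.ne rfl
    rw [update_of_ne hj] at hadj
    obtain ⟨e, he', hje⟩ := exists_eq_one_or_neg_one_dvd_of_cycleGraph_adj hadj
    have hdvd : ((2 * (k + 2) : ℕ) : ℤ) ∣ ((j : ℕ) + 1) * s - e := by
      convert Int.dvd_sub (Int.dvd_add hje hxe) (hvs j) using 1
      ring
    have hjpos : 0 < (j : ℕ) := Fin.pos_iff_ne_zero.2 hj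
    have hjlt := j.isLt
    have hzero := Int.eq_zero_of_abs_lt_dvd hdvd (by
      rw [abs_lt]
      rcases hs with rfl | rfl <;> rcases he' with rfl | rfl <;> constructor <;> push_cast <;> omega)
    rcases hs with rfl | rfl <;> rcases he' with rfl | rfl <;> omega
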